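/- arXiv:1710.10855 — 2 statements merged into one kernel-verified Lean document; each statement's English description precedes it below -/
import Mathlib

section
/- For every n ≥ 1 there exists a subgroup G of Homeo([0,1]) such that h(G,[0,1]) = n. Hence the set of possible heights P_h([0,1]) = {h(G,[0,1]) : G ≤ Homeo([0,1])} equals {1,2,3,...} ∪ {+∞}. -/
open Set Topology unitInterval

noncomputable section

/-- Group structure on self-homeomorphisms (composition). -/
instance homeoGroup {X : Type*} [TopologicalSpace X] : Group (X ≃ₜ X) where
  mul f g := g.trans f
  one := Homeomorph.refl X
  inv := Homeomorph.symm
  mul_assoc _ _ _ := Homeomorph.ext fun _ => rfl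
  one_mul _ := Homeomorph.ext fun _ => rfl
  mul_one _ := Homeomorph.ext fun _ => rfl
  inv_mul_cancel f := Homeomorph.ext fun x => f.symm_apply_apply x

/-- A set is invariant under a group of homeomorphisms. -/
def InvariantUnder {X : Type*} [TopologicalSpace X] (G : Subgroup (X ≃ₜ X)) (Y : Set X) : Prop :=
  ∀ g ∈ G, ∀ y ∈ Y, g y ∈ Y

/-- Lengths of strictly increasing chains of nonempty closed invariant sets ending at `univ`. -/
def heightSet {X : Type*} [TopologicalSpace X] (G : Subgroup (X ≃ₜ X)) : Set ℕ :=
  {n | ∃ Y : Fin (n + 1) → Set X,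
    StrictMono Y ∧ (∀ i, (Y i).Nonempty ∧ IsClosed (Y i) ∧ InvariantUnder G (Y i)) ∧
    Y (Fin.last n) = Set.univ}

/-- The height of a transformation group. -/
def height {X : Type*} [TopologicalSpace X] (G : Subgroup (X ≃ₜ X)) : ℕ∞ :=
  sSup ((fun n : ℕ => (n : ℕ∞)) '' heightSet G)

/-- The set of achievable heights on phase space `X`. -/
def PH (X : Type*) [TopologicalSpace X] : Set ℕ∞ :=
  {h | ∃ G : Subgroup (X ≃ₜ X), height G = h}

end

/-!
If `c : X → ℕ` takes exactly the values `0, …, n` and is lower semicontinuous, then a group of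
homeomorphisms that preserves `c` and acts transitively on its fibres has height `n`: the sublevel
sets of `c` form a chain of length `n`, and along any chain the sets of labels met by its members
grow strictly inside a set of `n + 1` elements.

On `[0,1]`, the points `k / n` and the open intervals between them, each identified with its mirror
image under `x ↦ 1 - x`, make up `n + 1` such fibres; enumerating the points before the intervals
makes the labelling lower semicontinuous. Heights decrease as the group grows, so the trivial group
has infinite height. No height is zero, because every homeomorphism preserves `{0, 1}`.
-/

section Height

theorem exists_mem_forall_lt_notMem {X : Type*} {m : ℕ} {Y : Fin (m + 1) → Set X}
    (hmono : StrictMono Y) (hne : (Y 0).Nonempty) (i : Fin (m + 1)) :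
    ∃ x ∈ Y i, ∀ j < i, x ∉ Y j := by
  cases i using Fin.cases with
  | zero => exact hne.imp fun x hx => ⟨hx, fun j hj => absurd hj (Fin.not_lt_zero j)⟩
  | succ k =>
    obtain ⟨x, hx, hxk⟩ := exists_of_ssubset (hmono (Fin.castSucc_lt_succ (i := k)))
    exact ⟨x, hx, fun j hj hxj => hxk (hmono.monotone (Fin.le_castSucc_iff.2 hj) hxj)⟩

variable {X ι : Type*} [TopologicalSpace X] {G : Subgroup (X ≃ₜ X)}

theorem natCast_le_height {m : ℕ} (hm : m ∈ heightSet G) : (m : ℕ∞) ≤ height G :=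
  le_sSup ⟨m, hm, rfl⟩

theorem height_antitone : Antitone (height : Subgroup (X ≃ₜ X) → ℕ∞) := by
  intro G H hGH
  refine sSup_le_sSup (image_mono ?_)
  rintro m ⟨Y, hmono, hY, hlast⟩
  exact ⟨Y, hmono, fun i => ⟨(hY i).1, (hY i).2.1, fun g hg => (hY i).2.2 g (hGH hg)⟩, hlast⟩

theorem height_bot_eq_top (h : ∀ n : ℕ, ∃ G : Subgroup (X ≃ₜ X), n ≤ height G) :
    height (⊥ : Subgroup (X ≃ₜ X)) = ⊤ :=
  ENat.eq_top_iff_forall_ge.2 fun n =>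
    let ⟨_, hG⟩ := h n
    hG.trans (height_antitone bot_le)

theorem one_le_height_of_invariantUnder {Y : Set X} (hne : Y.Nonempty) (hclosed : IsClosed Y)
    (hinv : InvariantUnder G Y) (hY : Y ≠ univ) : 1 ≤ height G := by
  refine mod_cast natCast_le_height (m := 1) ⟨![Y, univ], ?_, ?_, rfl⟩
  · simpa [Fin.strictMono_iff_lt_succ] using hY.lt_top
  · rw [Fin.forall_fin_two]
    exact ⟨⟨hne, hclosed, hinv⟩, hne.mono (subset_univ Y), isClosed_univ, fun _ _ _ _ => trivial⟩

/-- Any two points with the same label under `c` lie in the same orbit of `G`. -/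
def TransitiveOnFibers (G : Subgroup (X ≃ₜ X)) (c : X → ι) : Prop :=
  ∀ x y, c x = c y → ∃ g ∈ G, g x = y

theorem TransitiveOnFibers.add_one_le_encard_range {c : X → ι} (hc : TransitiveOnFibers G c)
    {m : ℕ} (hm : m ∈ heightSet G) : (m + 1 : ℕ∞) ≤ (range c).encard := by
  obtain ⟨Y, hmono, hY, -⟩ := hm
  choose x hxmem hxnot using exists_mem_forall_lt_notMem hmono (hY 0).1
  have label_ne {i j : Fin (m + 1)} (hij : i < j) : c (x i) ≠ c (x j) := by
    intro heq
    obtain ⟨g, hg, hgx⟩ := hc _ _ heq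
    exact hxnot j i hij (hgx ▸ (hY i).2.2 g hg _ (hxmem i))
  have label_injective : Function.Injective (c ∘ x) := fun i j heq =>
    by_contra fun hne => (lt_or_gt_of_ne hne).elim (label_ne · heq) (label_ne · heq.symm)
  calc (m + 1 : ℕ∞) = ENat.card (Fin (m + 1)) := by simp
    _ ≤ (range (c ∘ x)).encard := label_injective.encard_range
    _ ≤ (range c).encard := encard_le_encard (range_comp_subset_range x c)

/-- The group of homeomorphisms preserving the label `c x` of every point `x`. -/
def labelStabilizer (c : X → ι) : Subgroup (X ≃ₜ X) where
  carrier := {g | ∀ x, c (g x) = c x}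
  mul_mem' {f g} hf hg x := (hf (g x)).trans (hg x)
  one_mem' _ := rfl
  inv_mem' {g} hg x := by simpa using (hg (g.symm x)).symm

theorem mem_heightSet_of_le_labelStabilizer {c : X → ℕ} {n : ℕ} (hG : G ≤ labelStabilizer c)
    (hlsc : LowerSemicontinuous c) (hrange : range c = Iic n) : n ∈ heightSet G := by
  refine ⟨fun i => c ⁻¹' Iic (i : ℕ), ?_, fun i => ⟨?_, hlsc.isClosed_preimage _, ?_⟩, ?_⟩
  · intro i j hij
    obtain ⟨x, hx⟩ : (j : ℕ) ∈ range c := hrange ▸ Nat.le_of_lt_succ j.2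
    have hsub : c ⁻¹' Iic (i : ℕ) ⊆ c ⁻¹' Iic (j : ℕ) := preimage_mono (Iic_subset_Iic.2 hij.le)
    exact (ssubset_iff_of_subset hsub).2 ⟨x, hx.le, fun hxi => hij.not_ge (hx.symm.trans_le hxi)⟩
  · obtain ⟨x, hx⟩ : 0 ∈ range c := hrange ▸ n.zero_le
    exact ⟨x, hx.le.trans i.1.zero_le⟩
  · intro g hg x hx
    exact (hG hg x).le.trans hx
  · exact preimage_eq_univ_iff.2 hrange.le

theorem TransitiveOnFibers.height_eq {c : X → ℕ} {n : ℕ} (htrans : TransitiveOnFibers G c)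
    (hG : G ≤ labelStabilizer c) (hlsc : LowerSemicontinuous c) (hrange : range c = Iic n) :
    height G = n := by
  refine le_antisymm (sSup_le ?_)
    (natCast_le_height (mem_heightSet_of_le_labelStabilizer hG hlsc hrange))
  rintro _ ⟨m, hm, rfl⟩
  have hcard : (m + 1 : ℕ∞) ≤ n + 1 := by
    simpa [hrange, ← Finset.coe_Iic, encard_coe_eq_coe_finsetCard] using
      htrans.add_one_le_encard_range hm
  exact Nat.cast_le.2 (Nat.le_of_add_le_add_right (mod_cast hcard))

theorem TransitiveOnFibers.of_representatives {c : X → ι} {S : Set X}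
    (hG : G ≤ labelStabilizer c) (hS : ∀ x, ∃ g ∈ G, g x ∈ S)
    (htrans : ∀ x ∈ S, ∀ y ∈ S, c x = c y → ∃ g ∈ G, g x = y) : TransitiveOnFibers G c := by
  intro x y hxy
  obtain ⟨f, hf, hfx⟩ := hS x
  obtain ⟨h, hh, hhy⟩ := hS y
  obtain ⟨g, hg, hgfx⟩ := htrans _ hfx _ hhy (by rw [hG hf x, hG hh y, hxy])
  refine ⟨h⁻¹ * (g * f), mul_mem (inv_mem hh) (mul_mem hg hf), ?_⟩
  change h.symm (g (f x)) = y
  rw [hgfx, h.symm_apply_apply]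

theorem mem_labelStabilizer_of_eqOn_compl {c : X → ι} {g : X ≃ₜ X} {S : Set X}
    (hg : ∀ z ∉ S, g z = z) (hc : ∀ z ∈ S, ∀ w ∈ S, c z = c w) : g ∈ labelStabilizer c := by
  intro z
  by_cases hz : z ∈ S
  · have hgz : g z ∈ S := by
      by_contra hgz
      exact hgz ((g.injective (hg _ hgz)).symm ▸ hz)
    exact hc _ hgz _ hz
  · rw [hg z hz]

end Height

section Interval

theorem invariantUnder_bot_top {α : Type*} [ConditionallyCompleteLinearOrder α]
    [BoundedOrder α] [DenselyOrdered α] [TopologicalSpace α] [OrderTopology α]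
    (G : Subgroup (α ≃ₜ α)) : InvariantUnder G {⊥, ⊤} := by
  rintro g - x hx
  rcases g.continuous.strictMono_of_inj_boundedOrder' g.injective with hmono | hanti
  · let e : α ≃o α := hmono.orderIsoOfSurjective g g.surjective
    exact hx.imp (by rintro rfl; exact e.map_bot) (by rintro rfl; exact e.map_top)
  · let e : α ≃o αᵒᵈ := StrictMono.orderIsoOfSurjective (OrderDual.toDual ∘ g) hanti g.surjective
    exact hx.symm.imp (by rintro rfl; exact e.map_top) (by rintro rfl; exact e.map_bot)

theorem one_le_height {α : Type*} [ConditionallyCompleteLinearOrder α] [BoundedOrder α]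
    [DenselyOrdered α] [Nontrivial α] [TopologicalSpace α] [OrderTopology α]
    (G : Subgroup (α ≃ₜ α)) : 1 ≤ height G := by
  refine one_le_height_of_invariantUnder (insert_nonempty _ _) (toFinite _).isClosed
    (invariantUnder_bot_top G) fun huniv => ?_
  obtain ⟨x, hx⟩ := exists_between (bot_lt_top (α := α))
  rcases huniv.ge (mem_univ x) with h | h
  exacts [hx.1.ne' h, hx.2.ne h]

theorem exists_orderIso_real_apply_eq_of_le {a b x y : ℝ} (hax : a < x) (hxy : x ≤ y)
    (hyb : y < b) : ∃ e : ℝ ≃o ℝ, e x = y ∧ ∀ z ∉ Ioo a b, e z = z := by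
  let p := (y - a) / (x - a)
  let q := (b - y) / (b - x)
  have hp : p * (x - a) = y - a := div_mul_cancel₀ _ (by linarith)
  have hq : q * (b - x) = b - y := div_mul_cancel₀ _ (by linarith)
  have one_le_p : 1 ≤ p := (one_le_div (by linarith)).2 (by linarith)
  have q_le_one : q ≤ 1 := (div_le_one (by linarith)).2 (by linarith)
  have q_pos : 0 < q := div_pos (by linarith) (by linarith)
  -- Inside `(a, b)` the graph is the polygonal path through `(a, a)`, `(x, y)` and `(b, b)`, which
  -- is the lower of two lines; outside, the lower line lies below the diagonal.
  let F : ℝ → ℝ := fun z => max z (min (a + p * (z - a)) (b - q * (b - z)))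
  have F_strictMono : StrictMono F := fun u v huv =>
    max_lt_max huv (min_lt_min
      (by linarith [mul_lt_mul_of_pos_left huv (one_pos.trans_le one_le_p)])
      (by linarith [mul_lt_mul_of_pos_left huv q_pos]))
  have F_eq_self {z : ℝ} (hz : z ∉ Ioo a b) : F z = z := by
    refine max_eq_left ?_
    rcases le_or_gt z a with hza | haz
    · have := mul_le_mul_of_nonpos_right one_le_p (sub_nonpos.2 hza)
      exact (min_le_left _ _).trans (by linarith)
    · have hbz : b ≤ z := not_lt.1 fun hzb => hz ⟨haz, hzb⟩
      have := mul_le_mul_of_nonpos_right q_le_one (sub_nonpos.2 hbz)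
      exact (min_le_right _ _).trans (by linarith)
  have F_surjective : Function.Surjective F := fun w =>
    mem_range_of_exists_le_of_exists_ge (by fun_prop)
      ⟨min a w, (F_eq_self fun h => h.1.not_ge (min_le_left a w)).trans_le (min_le_right a w)⟩
      ⟨w, le_max_left _ _⟩
  refine ⟨F_strictMono.orderIsoOfSurjective F F_surjective, ?_, fun z hz => F_eq_self hz⟩
  change max x (min (a + p * (x - a)) (b - q * (b - x))) = y
  rw [hp, hq, add_sub_cancel, sub_sub_cancel, min_self, max_eq_right hxy]

theorem exists_orderIso_real_apply_eq {a b x y : ℝ} (hx : x ∈ Ioo a b) (hy : y ∈ Ioo a b) :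
    ∃ e : ℝ ≃o ℝ, e x = y ∧ ∀ z ∉ Ioo a b, e z = z := by
  rcases le_total x y with hxy | hyx
  · exact exists_orderIso_real_apply_eq_of_le hx.1 hxy hy.2
  · obtain ⟨e, hey, he⟩ := exists_orderIso_real_apply_eq_of_le hy.1 hyx hx.2
    exact ⟨e.symm, e.symm_apply_eq.2 hey.symm, fun z hz => e.symm_apply_eq.2 (he z hz).symm⟩

theorem exists_homeomorph_unitInterval_apply_eq {a b x y : I} (hx : x ∈ Ioo a b)
    (hy : y ∈ Ioo a b) : ∃ g : I ≃ₜ I, g x = y ∧ ∀ z ∉ Ioo a b, g z = z := by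
  obtain ⟨e, hex, he⟩ := exists_orderIso_real_apply_eq (a := a) (b := b) (x := x) (y := y) hx hy
  have he0 : e 0 = 0 := he 0 fun h => h.1.not_ge a.2.1
  have he1 : e 1 = 1 := he 1 fun h => h.2.not_ge b.2.2
  have he_mem (z : ℝ) : z ∈ I ↔ e z ∈ I := by
    rw [mem_Icc, mem_Icc, ← e.le_iff_le, he0, ← e.le_iff_le (y := 1), he1]
  exact ⟨e.toHomeomorph.subtype he_mem, Subtype.ext hex, fun z hz => Subtype.ext (he z hz)⟩

end Interval

section CellRank

/-- The rank of the cell containing `s ≥ 0` in the decomposition of `[0, ∞)` into the vertices `k`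
and the edges `(k, k + 1)`, `k : ℕ`. The vertex `k` has rank `k` and the edge `(k, k + 1)` has rank
`m + k + 1`, so that the vertices up to `m` come before all edges. -/
noncomputable def cellRank (m : ℕ) (s : ℝ) : ℕ :=
  if (⌊s⌋₊ : ℝ) = s then ⌊s⌋₊ else m + ⌈s⌉₊

variable {m : ℕ} {s t : ℝ}

theorem cellRank_natCast (m k : ℕ) : cellRank m k = k := by
  simp [cellRank]

theorem cellRank_of_mem_Ioo {k : ℕ} (hs : s ∈ Ioo (k : ℝ) (k + 1)) :
    cellRank m s = m + k + 1 := by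
  have hfloor : ⌊s⌋₊ = k := Nat.floor_eq_on_Ico k s ⟨hs.1.le, hs.2⟩
  have hceil : ⌈s⌉₊ = k + 1 := (Nat.ceil_eq_iff k.succ_ne_zero).2 (by simpa using ⟨hs.1, hs.2.le⟩)
  rw [cellRank, if_neg (by rw [hfloor]; exact hs.1.ne), hceil, add_assoc]

theorem exists_eq_natCast_or_mem_Ioo (hs : 0 ≤ s) :
    ∃ k : ℕ, s = k ∨ s ∈ Ioo (k : ℝ) (k + 1) :=
  ⟨⌊s⌋₊, (Nat.floor_le hs).eq_or_lt.imp Eq.symm fun h => ⟨h, Nat.lt_floor_add_one s⟩⟩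

theorem cellRank_le_iff (hs : 0 ≤ s) {i : ℕ} :
    cellRank m s ≤ i ↔ (s ∈ range ((↑) : ℕ → ℝ) ∧ s ≤ i) ∨ s + m ≤ i := by
  obtain ⟨k, rfl | hk⟩ := exists_eq_natCast_or_mem_Ioo hs
  · rw [cellRank_natCast]
    norm_cast
    simp only [mem_range_self, true_and]
    omega
  · have not_vertex : s ∉ range ((↑) : ℕ → ℝ) := by
      rintro ⟨j, rfl⟩
      obtain ⟨hkj, hjk⟩ := hk
      norm_cast at hkj hjk
      omega
    rw [cellRank_of_mem_Ioo hk, or_iff_right fun h => not_vertex h.1]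
    constructor
    · intro h
      have : (m + k + 1 : ℝ) ≤ i := mod_cast h
      linarith [hk.2]
    · intro h
      have : (m + k : ℝ) < i := by linarith [hk.1]
      exact mod_cast this

theorem isClosed_setOf_vertex_or_add_le (m i : ℕ) :
    IsClosed {s : ℝ | (s ∈ range ((↑) : ℕ → ℝ) ∧ s ≤ i) ∨ s + m ≤ i} :=
  (Nat.isClosedEmbedding_coe_real.isClosed_range.inter isClosed_Iic).union
    (isClosed_le (continuous_add_const (m : ℝ)) continuous_const)

theorem eq_or_mem_Ioo_of_cellRank_eq (hs : s ∈ Ico (0 : ℝ) (m + 1)) (ht : t ∈ Ico (0 : ℝ) (m + 1))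
    (h : cellRank m s = cellRank m t) :
    s = t ∨ ∃ k : ℕ, s ∈ Ioo (k : ℝ) (k + 1) ∧ t ∈ Ioo (k : ℝ) (k + 1) := by
  obtain ⟨k, rfl | hk⟩ := exists_eq_natCast_or_mem_Ioo hs.1 <;>
    obtain ⟨l, rfl | hl⟩ := exists_eq_natCast_or_mem_Ioo ht.1
  · rw [cellRank_natCast, cellRank_natCast] at h
    exact .inl (h ▸ rfl)
  · rw [cellRank_natCast, cellRank_of_mem_Ioo hl] at h
    have : k < m + 1 := mod_cast hs.2
    omega
  · rw [cellRank_natCast, cellRank_of_mem_Ioo hk] at h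
    have : l < m + 1 := mod_cast ht.2
    omega
  · rw [cellRank_of_mem_Ioo hk, cellRank_of_mem_Ioo hl] at h
    obtain rfl : k = l := by omega
    exact .inr ⟨k, hk, hl⟩

theorem exists_cellRank_eq {n k : ℕ} (hk : k ≤ n) :
    ∃ s : ℝ, 0 ≤ s ∧ 2 * s ≤ n ∧ cellRank (n / 2) s = k := by
  rcases le_or_gt k (n / 2) with hvertex | hedge
  · refine ⟨k, k.cast_nonneg, ?_, cellRank_natCast _ k⟩
    exact mod_cast (by omega : 2 * k ≤ n)
  · obtain ⟨j, rfl⟩ : ∃ j, k = n / 2 + j + 1 := ⟨k - n / 2 - 1, by omega⟩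
    refine ⟨j + 1 / 2, by positivity, ?_, cellRank_of_mem_Ioo ⟨by linarith, by linarith⟩⟩
    have : (2 * j + 1 : ℝ) ≤ n := mod_cast (by omega : 2 * j + 1 ≤ n)
    linarith

end CellRank

section CellLabel

/-- The coordinate `n x` on `[0, 1 / 2]`, extended to `[0, 1]` by the symmetry `x ↦ 1 - x`. -/
noncomputable def foldedCoord (n : ℕ) (x : I) : ℝ := min (n * (x : ℝ)) (n * (σ x : ℝ))

variable {n : ℕ} {x y : I}

theorem continuous_foldedCoord (n : ℕ) : Continuous (foldedCoord n) := by
  unfold foldedCoord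
  fun_prop

theorem foldedCoord_symm (n : ℕ) (x : I) : foldedCoord n (σ x) = foldedCoord n x := by
  rw [foldedCoord, unitInterval.symm_symm, min_comm, foldedCoord]

theorem foldedCoord_nonneg (n : ℕ) (x : I) : 0 ≤ foldedCoord n x :=
  le_min (mul_nonneg n.cast_nonneg x.2.1) (mul_nonneg n.cast_nonneg (σ x).2.1)

theorem two_mul_foldedCoord_le (n : ℕ) (x : I) : 2 * foldedCoord n x ≤ n := by
  have hleft : foldedCoord n x ≤ n * x := min_le_left _ _
  have hright : foldedCoord n x ≤ n * (1 - x) := min_le_right _ _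
  linarith

theorem foldedCoord_lt_half_add_one (n : ℕ) (x : I) : foldedCoord n x < (n / 2 : ℕ) + 1 := by
  have : (n : ℝ) < 2 * ((n / 2 : ℕ) + 1) := mod_cast (by omega : n < 2 * (n / 2 + 1))
  linarith [two_mul_foldedCoord_le n x]

theorem foldedCoord_of_le_half (n : ℕ) (hx : (x : ℝ) ≤ 1 / 2) : foldedCoord n x = n * x :=
  min_eq_left (mul_le_mul_of_nonneg_left (hx.trans ((half_le_symm_iff x).2 hx)) n.cast_nonneg)

theorem foldedCoord_mem_Ioo {k : ℕ} (hk : 2 * k < n) (hx : n * (x : ℝ) ∈ Ioo (k : ℝ) (k + 1)) :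
    foldedCoord n x ∈ Ioo (k : ℝ) (k + 1) := by
  refine ⟨lt_min hx.1 ?_, (min_le_left _ _).trans_lt hx.2⟩
  have : (2 * k + 1 : ℝ) ≤ n := mod_cast hk
  rw [coe_symm_eq]
  linarith [hx.2]

theorem exists_foldedCoord_eq (hn : n ≠ 0) {s : ℝ} (hs : 0 ≤ s) (hsn : 2 * s ≤ n) :
    ∃ x : I, foldedCoord n x = s := by
  have hn' : (0 : ℝ) < n := by positivity
  refine ⟨⟨s / n, div_mem hs hn'.le (by linarith)⟩, ?_⟩
  rw [foldedCoord_of_le_half n ((div_le_iff₀ hn').2 (by linarith)), mul_div_cancel₀ _ hn'.ne']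

/-- The labelling of `[0, 1]` by `0, …, n` whose fibres are the pairs `{k / n, (n - k) / n}` (first)
and the unions of an interval `(k / n, (k + 1) / n)` with its mirror image (last). -/
noncomputable def cellLabel (n : ℕ) (x : I) : ℕ := cellRank (n / 2) (foldedCoord n x)

theorem lowerSemicontinuous_cellLabel (n : ℕ) : LowerSemicontinuous (cellLabel n) := by
  refine lowerSemicontinuous_iff_isClosed_preimage.2 fun i => ?_
  convert (isClosed_setOf_vertex_or_add_le (n / 2) i).preimage (continuous_foldedCoord n)
  ext x
  exact cellRank_le_iff (foldedCoord_nonneg n x)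

theorem range_cellLabel (hn : n ≠ 0) : range (cellLabel n) = Iic n := by
  refine Subset.antisymm (range_subset_iff.2 fun x => ?_) fun k hk => ?_
  · have : (2 * (n / 2 : ℕ) : ℝ) ≤ n := mod_cast (by omega : 2 * (n / 2) ≤ n)
    exact (cellRank_le_iff (foldedCoord_nonneg n x)).2
      (.inr (by linarith [two_mul_foldedCoord_le n x]))
  · obtain ⟨s, hs, hsn, rfl⟩ := exists_cellRank_eq hk
    obtain ⟨x, rfl⟩ := exists_foldedCoord_eq hn hs hsn
    exact mem_range_self x

theorem symmHomeomorph_mem_labelStabilizer (n : ℕ) :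
    symmHomeomorph ∈ labelStabilizer (cellLabel n) := fun x =>
  congrArg (cellRank (n / 2)) (foldedCoord_symm n x)

theorem exists_mem_labelStabilizer_le_half (n : ℕ) (x : I) :
    ∃ g ∈ labelStabilizer (cellLabel n), (g x : ℝ) ≤ 1 / 2 := by
  rcases le_total (x : ℝ) (1 / 2) with hx | hx
  · exact ⟨1, one_mem _, hx⟩
  · have hσx : (σ x : ℝ) ≤ 1 / 2 := (half_le_symm_iff (σ x)).1 (by rwa [symm_symm])
    exact ⟨symmHomeomorph, symmHomeomorph_mem_labelStabilizer n, hσx⟩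

theorem exists_mem_labelStabilizer_apply_eq_of_mem_Ioo {k : ℕ} (hk : 2 * k < n)
    (hx : n * (x : ℝ) ∈ Ioo (k : ℝ) (k + 1)) (hy : n * (y : ℝ) ∈ Ioo (k : ℝ) (k + 1)) :
    ∃ g ∈ labelStabilizer (cellLabel n), g x = y := by
  have hn : (0 : ℝ) < n := mod_cast (by omega : 0 < n)
  have hkn : (k + 1 : ℝ) ≤ n := mod_cast (by omega : k + 1 ≤ n)
  let a : I := ⟨k / n, div_mem k.cast_nonneg hn.le (by linarith)⟩
  let b : I := ⟨(k + 1) / n, div_mem (by positivity) hn.le hkn⟩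
  have mem_Ioo_iff (z : I) : z ∈ Ioo a b ↔ n * (z : ℝ) ∈ Ioo (k : ℝ) (k + 1) :=
    and_congr (div_lt_iff₀' hn) (lt_div_iff₀' hn)
  have cellLabel_eq : ∀ z ∈ Ioo a b, cellLabel n z = n / 2 + k + 1 := fun z hz =>
    cellRank_of_mem_Ioo (foldedCoord_mem_Ioo hk ((mem_Ioo_iff z).1 hz))
  obtain ⟨g, hgx, hg⟩ :=
    exists_homeomorph_unitInterval_apply_eq ((mem_Ioo_iff x).2 hx) ((mem_Ioo_iff y).2 hy)
  exact ⟨g, mem_labelStabilizer_of_eqOn_compl hg fun z hz w hw =>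
    (cellLabel_eq z hz).trans (cellLabel_eq w hw).symm, hgx⟩

theorem transitiveOnFibers_cellLabel (hn : n ≠ 0) :
    TransitiveOnFibers (labelStabilizer (cellLabel n)) (cellLabel n) := by
  refine .of_representatives (S := {x | (x : ℝ) ≤ 1 / 2}) le_rfl
    (exists_mem_labelStabilizer_le_half n) ?_
  intro x hx y hy hxy
  have hcell := eq_or_mem_Ioo_of_cellRank_eq
    ⟨foldedCoord_nonneg n x, foldedCoord_lt_half_add_one n x⟩
    ⟨foldedCoord_nonneg n y, foldedCoord_lt_half_add_one n y⟩ hxy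
  rw [foldedCoord_of_le_half n hx, foldedCoord_of_le_half n hy] at hcell
  rcases hcell with heq | ⟨k, hxk, hyk⟩
  · exact ⟨1, one_mem _, Subtype.ext (mul_left_cancel₀ (Nat.cast_ne_zero.2 hn) heq)⟩
  · have hk : (2 * k : ℝ) < n := by
      linarith [hxk.1, foldedCoord_of_le_half n hx, two_mul_foldedCoord_le n x]
    exact exists_mem_labelStabilizer_apply_eq_of_mem_Ioo (mod_cast hk) hxk hyk

theorem height_labelStabilizer_cellLabel (hn : n ≠ 0) :
    height (labelStabilizer (cellLabel n)) = n :=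
  (transitiveOnFibers_cellLabel hn).height_eq le_rfl (lowerSemicontinuous_cellLabel n)
    (range_cellLabel hn)

end CellLabel

theorem height_bot_unitInterval : height (⊥ : Subgroup (I ≃ₜ I)) = ⊤ :=
  height_bot_eq_top fun n => ⟨_, (Nat.cast_le.2 n.le_succ).trans
    (height_labelStabilizer_cellLabel n.succ_ne_zero).ge⟩

/-- Every `n ≥ 1` is realized as a height on `[0,1]`, and
`P_h([0,1]) = {1, 2, 3, …} ∪ {+∞}`. -/
theorem PH_unitInterval :
    (∀ n : ℕ, 1 ≤ n → ∃ G : Subgroup (I ≃ₜ I), height G = (n : ℕ∞)) ∧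
    PH I = {h : ℕ∞ | 1 ≤ h} := by
  have realize (n : ℕ) (hn : 1 ≤ n) : ∃ G : Subgroup (I ≃ₜ I), height G = (n : ℕ∞) :=
    ⟨_, height_labelStabilizer_cellLabel (Nat.one_le_iff_ne_zero.1 hn)⟩
  refine ⟨realize, Subset.antisymm ?_ fun h hh => ?_⟩
  · rintro _ ⟨G, rfl⟩
    exact one_le_height G
  · rw [mem_ofPred_eq] at hh
    cases h with
    | top => exact ⟨⊥, height_bot_unitInterval⟩
    | coe n => exact realize n (mod_cast hh)
end

section
/- For the star graph *_n (n ≥ 3), the set of achievable heights is P_h(*_n) = {2,3,4,...} ∪ {+∞}: every integer m ≥ 2 and +∞ occur as h(G,*_n) for some subgroup G of Homeo(*_n), and no value below 2 occurs. -/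
open Set Topology unitInterval

noncomputable section

/-- The `k`-th outer vertex of the star graph, an `n`-th root of unity. -/
def starVertex (n : ℕ) (k : Fin n) : ℂ :=
  Complex.exp (2 * (Real.pi : ℂ) * Complex.I * ((k : ℕ) : ℂ) / (n : ℂ))

/-- The star graph `*_n`: union of `n` segments from the center `0` to the roots of unity. -/
def starGraph (n : ℕ) : Set ℂ := ⋃ k : Fin n, segment ℝ 0 (starVertex n k)

end

/-!
Along an invariant chain each set contains an orbit missed by the previous ones, so a group whose
orbits are the level sets of a lower semicontinuous colouring by `0, …, m` has height `m`, attained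
by the chain of sublevel sets. Such colourings of the line are built recursively: put a copy of the
previous colouring into every gap between consecutive integers and give the integers a new lowest
colour. Colouring a point of the star graph by its norm, with the centre one level further down,
yields every finite height `≥ 2`; the trivial group yields `+∞`.

Conversely, the complement of a point is connected exactly at the outer vertices, and it is a union
of two connected sets exactly away from the centre. Hence every homeomorphism preserves the chain
`{0} ⊂ {0} ∪ {outer vertices} ⊂ *_n`, and no height is below `2`.
-/

section Height

variable {X : Type*} [TopologicalSpace X] {G : Subgroup (X ≃ₜ X)}

theorem lt_ncard_range_of_mem_heightSet {ι : Type*} {c : X → ι} (hfin : (range c).Finite)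
    (hc : ∀ x y, c x = c y → ∃ g ∈ G, g x = y) {N : ℕ} (hN : N ∈ heightSet G) :
    N < (range c).ncard := by
  obtain ⟨Y, hY, hYprop, -⟩ := hN
  have exists_new : ∀ i, ∃ x ∈ Y i, ∀ j < i, x ∉ Y j := by
    intro i
    induction i using Fin.cases with
    | zero => exact (hYprop 0).1.imp fun x hx => ⟨hx, fun j hj => absurd hj j.not_lt_zero⟩
    | succ i =>
      obtain ⟨x, hx, hx'⟩ := exists_of_ssubset (hY i.castSucc_lt_succ)
      exact ⟨x, hx, fun j hj hxj => hx' (hY.monotone (Fin.le_castSucc_iff.2 hj) hxj)⟩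
  choose x hx hx_new using exists_new
  have hcx : Function.Injective (c ∘ x) := by
    refine .of_lt_imp_ne fun j i hji heq => ?_
    obtain ⟨g, hg, hgx⟩ := hc _ _ heq
    exact hx_new i j hji (hgx ▸ (hYprop j).2.2 g hg _ (hx j))
  calc N < Nat.card (Fin (N + 1)) := by simp
    _ = (range (c ∘ x)).ncard := (ncard_range_of_injective hcx).symm
    _ ≤ (range c).ncard := ncard_le_ncard (range_comp_subset_range x c) hfin

theorem mem_heightSet_of_lowerSemicontinuous {c : X → ℕ} (hlsc : LowerSemicontinuous c) {m : ℕ}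
    (hrange : range c = Iic m) (hinv : ∀ g ∈ G, ∀ x, c (g x) = c x) : m ∈ heightSet G := by
  have exists_eq : ∀ i ≤ m, ∃ x, c x = i := fun i hi => hrange.symm.subset hi
  refine ⟨fun i => c ⁻¹' Iic i, fun i j hij => ?_, fun i => ⟨?_, ?_, ?_⟩, ?_⟩
  · obtain ⟨x, hx⟩ := exists_eq j j.is_le
    exact ssubset_iff_exists.2 ⟨preimage_mono (Iic_subset_Iic.2 hij.le), x, hx.le,
      fun hxi => hij.not_ge (hx.symm.trans_le hxi)⟩
  · exact (exists_eq 0 m.zero_le).imp fun x hx => hx.trans_le (Nat.zero_le _)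
  · exact hlsc.isClosed_preimage _
  · exact fun g hg x hx => (hinv g hg x).trans_le hx
  · exact eq_univ_of_forall fun x => hrange.subset (mem_range_self x)

/-- The group of all homeomorphisms that preserve the colouring `c`. -/
def colourStabilizer {ι : Type*} (c : X → ι) : Subgroup (X ≃ₜ X) where
  carrier := {g | ∀ x, c (g x) = c x}
  mul_mem' {_ h} hg hh x := (hg (h x)).trans (hh x)
  one_mem' _ := rfl
  inv_mem' {g} hg x := (hg (g.symm x)).symm.trans (congrArg c (g.apply_symm_apply x))

theorem height_colourStabilizer {c : X → ℕ} (hlsc : LowerSemicontinuous c) {m : ℕ}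
    (hrange : range c = Iic m)
    (htrans : ∀ x y, c x = c y → ∃ g ∈ colourStabilizer c, g x = y) :
    height (colourStabilizer c) = m := by
  refine le_antisymm (sSup_le ?_) (le_sSup ⟨m, ?_, rfl⟩)
  · rintro _ ⟨N, hN, rfl⟩
    have := lt_ncard_range_of_mem_heightSet (hrange ▸ finite_Iic m) htrans hN
    rw [hrange, ncard_Iic_nat] at this
    exact Nat.cast_le.2 (Nat.le_of_lt_succ this)
  · exact mem_heightSet_of_lowerSemicontinuous hlsc hrange fun _ hg => hg

theorem height_bot_of_infinite [T1Space X] [Infinite X] :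
    height (⊥ : Subgroup (X ≃ₜ X)) = ⊤ := by
  let e := Infinite.natEmbedding X
  have mem_heightSet : ∀ m : ℕ, m ∈ heightSet (⊥ : Subgroup (X ≃ₜ X)) := by
    intro m
    refine ⟨fun i => {x | x ∈ e '' Iic (i : ℕ) ∨ m ≤ i}, fun i j hij => ?_,
      fun i => ⟨⟨e i, .inl (mem_image_of_mem e self_mem_Iic)⟩, ?_, ?_⟩, ?_⟩
    · refine ssubset_iff_exists.2 ⟨?_, e j, .inl (mem_image_of_mem e self_mem_Iic), ?_⟩
      · rintro x (hx | hm)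
        · exact .inl (image_mono (Iic_subset_Iic.2 (Fin.le_def.1 hij.le)) hx)
        · exact .inr (hm.trans hij.le)
      · rintro (hj | hm)
        · exact hij.not_ge ((e.injective.mem_set_image (s := Iic (i : ℕ))).1 hj)
        · exact (hm.trans_lt hij).not_ge j.is_le
    · exact ((finite_Iic _).image e).isClosed.union isClosed_const
    · rintro g rfl x hx
      exact hx
    · exact eq_univ_of_forall fun x => .inr le_rfl
  refine ENat.eq_top_iff_forall_ge.2 fun m => le_sSup ⟨m, mem_heightSet m, rfl⟩

end Height

section Colourings

variable {X : Type*} {Z : Set X} {e : X → ℕ}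

open Classical in
/-- The colouring `e` shifted up by one, with `Z` adjoined as a new stratum of colour `0`. -/
noncomputable def addStratum (Z : Set X) (e : X → ℕ) (x : X) : ℕ := if x ∈ Z then 0 else e x + 1

theorem addStratum_of_mem {x : X} (hx : x ∈ Z) : addStratum Z e x = 0 := if_pos hx

theorem addStratum_of_notMem {x : X} (hx : x ∉ Z) : addStratum Z e x = e x + 1 := if_neg hx

theorem addStratum_eq_zero_iff {x : X} : addStratum Z e x = 0 ↔ x ∈ Z :=
  ⟨not_imp_not.1 fun hx => addStratum_of_notMem hx ▸ Nat.succ_ne_zero _, addStratum_of_mem⟩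

theorem addStratum_congr {x y : X} (hZ : x ∈ Z ↔ y ∈ Z) (he : e x = e y) :
    addStratum Z e x = addStratum Z e y := by
  by_cases hx : x ∈ Z
  · rw [addStratum_of_mem hx, addStratum_of_mem (hZ.1 hx)]
  · rw [addStratum_of_notMem hx, addStratum_of_notMem (mt hZ.2 hx), he]

theorem range_addStratum (hZ : Z.Nonempty) {k : ℕ} (he : e '' Zᶜ = Iic k) :
    range (addStratum Z e) = Iic (k + 1) := by
  ext i
  constructor
  · rintro ⟨x, rfl⟩
    by_cases hx : x ∈ Z
    · exact (addStratum_of_mem hx).trans_le (Nat.zero_le _)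
    · exact (addStratum_of_notMem hx).trans_le
        (Nat.succ_le_succ (he.subset (mem_image_of_mem e hx)))
  · cases i with
    | zero => exact fun _ => hZ.imp fun x hx => addStratum_of_mem hx
    | succ i =>
      intro hi
      obtain ⟨x, hx, rfl⟩ := he.symm.subset (Nat.le_of_succ_le_succ hi)
      exact ⟨x, addStratum_of_notMem hx⟩

theorem lowerSemicontinuous_addStratum [TopologicalSpace X] (hZ : IsClosed Z)
    (he : ∀ x ∉ Z, LowerSemicontinuousAt e x) : LowerSemicontinuous (addStratum Z e) := by
  intro x i hi
  by_cases hx : x ∈ Z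
  · rw [addStratum_of_mem hx] at hi
    exact absurd hi i.not_lt_zero
  · rw [addStratum_of_notMem hx] at hi
    have off_Z : ∀ᶠ y in 𝓝 x, y ∉ Z := hZ.isOpen_compl.mem_nhds hx
    cases i with
    | zero =>
      filter_upwards [off_Z] with y hy
      exact (Nat.succ_pos _).trans_eq (addStratum_of_notMem hy).symm
    | succ i =>
      filter_upwards [off_Z, he x hx i (Nat.lt_of_succ_lt_succ hi)] with y hy hiy
      exact (Nat.succ_lt_succ hiy).trans_eq (addStratum_of_notMem hy).symm

end Colourings

section Gaps

/-- The inverse of the sigmoid function on `(0, 1)`. -/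
noncomputable def logit (t : ℝ) : ℝ := Real.log t - Real.log (1 - t)

theorem logit_sigmoid (x : ℝ) : logit (Real.sigmoid x) = x := by
  rw [logit, ← Real.sigmoid_neg, ← Real.sigmoid_mul_rexp_neg,
    Real.log_mul (Real.sigmoid_pos x).ne' (Real.exp_ne_zero _), Real.log_exp]
  ring

theorem continuousAt_logit {t : ℝ} (ht : t ∈ Ioo (0 : ℝ) 1) : ContinuousAt logit t :=
  (Real.continuousAt_log ht.1.ne').sub
    ((continuousAt_const.sub continuousAt_id).log (sub_pos.2 ht.2).ne')

theorem floor_intCast_add_sigmoid (k : ℤ) (x : ℝ) : ⌊(k : ℝ) + Real.sigmoid x⌋ = k := by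
  rw [Int.floor_intCast_add, Int.floor_eq_zero_iff.2 ⟨Real.sigmoid_nonneg x, Real.sigmoid_lt_one x⟩,
    add_zero]

theorem fract_intCast_add_sigmoid (k : ℤ) (x : ℝ) :
    Int.fract ((k : ℝ) + Real.sigmoid x) = Real.sigmoid x := by
  rw [Int.fract, floor_intCast_add_sigmoid, add_sub_cancel_left]

theorem intCast_add_sigmoid_notMem_range (k : ℤ) (x : ℝ) :
    (k : ℝ) + Real.sigmoid x ∉ range (Int.cast : ℤ → ℝ) := by
  rintro ⟨j, hj⟩
  have : Int.fract ((k : ℝ) + Real.sigmoid x) = 0 := hj ▸ Int.fract_intCast j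
  exact (Real.sigmoid_pos x).ne' ((fract_intCast_add_sigmoid k x).symm.trans this)

theorem exists_eq_intCast_or_intCast_add_sigmoid (x : ℝ) :
    ∃ k : ℤ, x = k ∨ ∃ y, x = k + Real.sigmoid y := by
  refine ⟨⌊x⌋, ?_⟩
  rcases (Int.fract_nonneg x).eq_or_lt with h | h
  · exact .inl (by rw [← Int.floor_add_fract x, ← h]; simp)
  · obtain ⟨y, hy⟩ : Int.fract x ∈ range Real.sigmoid :=
      Real.range_sigmoid ▸ ⟨h, Int.fract_lt_one x⟩
    exact .inr ⟨y, by rw [hy, Int.floor_add_fract]⟩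

open Classical in
/-- Fixes all integers and acts as `f` on each gap `(k, k + 1)`, identified with `ℝ` by
`x ↦ k + sigmoid x`. -/
noncomputable def gapMap (f : ℝ → ℝ) (x : ℝ) : ℝ :=
  if x ∈ range (Int.cast : ℤ → ℝ) then x else ⌊x⌋ + Real.sigmoid (f (logit (Int.fract x)))

theorem gapMap_intCast (f : ℝ → ℝ) (k : ℤ) : gapMap f k = k := if_pos ⟨k, rfl⟩

theorem gapMap_intCast_add_sigmoid (f : ℝ → ℝ) (k : ℤ) (x : ℝ) :
    gapMap f (k + Real.sigmoid x) = k + Real.sigmoid (f x) := by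
  rw [gapMap, if_neg (intCast_add_sigmoid_notMem_range k x), floor_intCast_add_sigmoid,
    fract_intCast_add_sigmoid, logit_sigmoid]

theorem floor_gapMap (f : ℝ → ℝ) (x : ℝ) : ⌊gapMap f x⌋ = ⌊x⌋ := by
  obtain ⟨k, rfl | ⟨a, rfl⟩⟩ := exists_eq_intCast_or_intCast_add_sigmoid x
  · rw [gapMap_intCast]
  · rw [gapMap_intCast_add_sigmoid, floor_intCast_add_sigmoid, floor_intCast_add_sigmoid]

theorem strictMono_gapMap {f : ℝ → ℝ} (hf : StrictMono f) : StrictMono (gapMap f) := by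
  intro x y hxy
  rcases (Int.floor_mono hxy.le).lt_or_eq with hlt | heq
  · exact Int.floor_mono.reflect_lt (by rwa [floor_gapMap, floor_gapMap])
  obtain ⟨j, rfl | ⟨a, rfl⟩⟩ := exists_eq_intCast_or_intCast_add_sigmoid x <;>
  obtain ⟨k, rfl | ⟨b, rfl⟩⟩ := exists_eq_intCast_or_intCast_add_sigmoid y <;>
  simp only [floor_intCast_add_sigmoid, Int.floor_intCast] at heq <;>
  subst heq <;>
  simp only [gapMap_intCast, gapMap_intCast_add_sigmoid]
  · exact hxy
  · exact lt_add_of_pos_right _ (Real.sigmoid_pos _)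
  · exact absurd hxy (le_add_of_nonneg_right (Real.sigmoid_nonneg _)).not_gt
  · simpa only [add_lt_add_iff_left, Real.sigmoid_strictMono.lt_iff_lt, hf.lt_iff_lt] using hxy

theorem rightInverse_gapMap {f g : ℝ → ℝ} (h : Function.RightInverse g f) :
    Function.RightInverse (gapMap g) (gapMap f) := by
  intro x
  obtain ⟨k, rfl | ⟨a, rfl⟩⟩ := exists_eq_intCast_or_intCast_add_sigmoid x
  · simp only [gapMap_intCast]
  · simp only [gapMap_intCast_add_sigmoid, h a]

/-- The colouring `d` copied into each gap between consecutive integers, with the integers as a new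
stratum of colour `0`. -/
noncomputable def gapCopies (d : ℝ → ℕ) : ℝ → ℕ :=
  addStratum (range Int.cast) (d ∘ logit ∘ Int.fract)

theorem gapCopies_intCast (d : ℝ → ℕ) (k : ℤ) : gapCopies d k = 0 := addStratum_of_mem ⟨k, rfl⟩

theorem gapCopies_intCast_add_sigmoid (d : ℝ → ℕ) (k : ℤ) (x : ℝ) :
    gapCopies d (k + Real.sigmoid x) = d x + 1 := by
  rw [gapCopies, addStratum_of_notMem (intCast_add_sigmoid_notMem_range k x), Function.comp_apply,
    Function.comp_apply, fract_intCast_add_sigmoid, logit_sigmoid]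

theorem gapCopies_add_intCast (d : ℝ → ℕ) (x : ℝ) (j : ℤ) :
    gapCopies d (x + j) = gapCopies d x := by
  obtain ⟨k, rfl | ⟨a, rfl⟩⟩ := exists_eq_intCast_or_intCast_add_sigmoid x
  · rw [← Int.cast_add, gapCopies_intCast, gapCopies_intCast]
  · rw [add_right_comm, ← Int.cast_add, gapCopies_intCast_add_sigmoid,
      gapCopies_intCast_add_sigmoid]

theorem periodic_gapCopies (d : ℝ → ℕ) : Function.Periodic (gapCopies d) 1 := fun x => by
  simpa only [Int.cast_one] using gapCopies_add_intCast d x 1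

theorem mem_range_intCast_iff_of_mem_Icc {t : ℝ} (ht : t ∈ Icc (0 : ℝ) 1) :
    t ∈ range (Int.cast : ℤ → ℝ) ↔ t = 0 ∨ t = 1 := by
  constructor
  · rintro ⟨k, rfl⟩
    have hk : 0 ≤ k ∧ k ≤ 1 := ⟨by exact_mod_cast ht.1, by exact_mod_cast ht.2⟩
    exact_mod_cast (by omega : k = 0 ∨ k = 1)
  · rintro (rfl | rfl)
    · exact ⟨0, Int.cast_zero⟩
    · exact ⟨1, Int.cast_one⟩

theorem floor_eq_floor_of_gapCopies_eq {d : ℝ → ℕ} {s t : ℝ} (hs : s ∈ Ioc (0 : ℝ) 1)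
    (ht : t ∈ Ioc (0 : ℝ) 1) (hst : gapCopies d s = gapCopies d t) : ⌊s⌋ = ⌊t⌋ := by
  have gapCopies_eq_zero_iff {r : ℝ} (hr : r ∈ Ioc (0 : ℝ) 1) : gapCopies d r = 0 ↔ r = 1 := by
    rw [gapCopies, addStratum_eq_zero_iff, mem_range_intCast_iff_of_mem_Icc
      (Ioc_subset_Icc_self hr), or_iff_right hr.1.ne']
  have eq_one_iff : s = 1 ↔ t = 1 := by
    rw [← gapCopies_eq_zero_iff hs, ← gapCopies_eq_zero_iff ht, hst]
  by_cases hs1 : s = 1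
  · rw [hs1, eq_one_iff.1 hs1]
  · rw [Int.floor_eq_zero_iff.2 ⟨hs.1.le, hs.2.lt_of_ne hs1⟩,
      Int.floor_eq_zero_iff.2 ⟨ht.1.le, ht.2.lt_of_ne (mt eq_one_iff.2 hs1)⟩]

theorem gapCopies_gapMap {d : ℝ → ℕ} {f : ℝ → ℝ} (hf : ∀ z, d (f z) = d z) (x : ℝ) :
    gapCopies d (gapMap f x) = gapCopies d x := by
  obtain ⟨k, rfl | ⟨a, rfl⟩⟩ := exists_eq_intCast_or_intCast_add_sigmoid x
  · rw [gapMap_intCast]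
  · rw [gapMap_intCast_add_sigmoid, gapCopies_intCast_add_sigmoid, gapCopies_intCast_add_sigmoid,
      hf]

theorem range_gapCopies {d : ℝ → ℕ} {k : ℕ} (hd : range d = Iic k) :
    range (gapCopies d) = Iic (k + 1) := by
  refine range_addStratum (range_nonempty _) (subset_antisymm ?_ ?_)
  · rintro _ ⟨x, -, rfl⟩
    exact hd.subset (mem_range_self _)
  · intro i hi
    obtain ⟨x, rfl⟩ := hd.symm.subset hi
    refine ⟨(0 : ℤ) + Real.sigmoid x, intCast_add_sigmoid_notMem_range 0 x, ?_⟩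
    simp only [Function.comp_apply, fract_intCast_add_sigmoid, logit_sigmoid]

theorem lowerSemicontinuous_gapCopies {d : ℝ → ℕ} (hd : LowerSemicontinuous d) :
    LowerSemicontinuous (gapCopies d) := by
  refine lowerSemicontinuous_addStratum Real.isClosed_range_intCast fun x hx => ?_
  have hfract : Int.fract x ∈ Ioo (0 : ℝ) 1 :=
    ⟨Int.fract_pos.2 fun h => hx ⟨⌊x⌋, h.symm⟩, Int.fract_lt_one x⟩
  exact (hd _).comp
    ((continuousAt_logit hfract).comp (continuousAt_fract fun h => hx ⟨⌊x⌋, h.symm⟩))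

/-- A lower semicontinuous colouring of the line with colours `0, …, k`, on each class of which the
colour-preserving increasing homeomorphisms act transitively. -/
structure IsHomogeneousColouring (k : ℕ) (d : ℝ → ℕ) : Prop where
  range_eq : range d = Iic k
  lowerSemicontinuous : LowerSemicontinuous d
  exists_orderIso : ∀ x y, d x = d y → ∃ f : ℝ ≃o ℝ, (∀ z, d (f z) = d z) ∧ f x = y

theorem isHomogeneousColouring_zero : IsHomogeneousColouring 0 fun _ => 0 where
  range_eq := range_const.trans Set.Iic_bot.symm
  lowerSemicontinuous := lowerSemicontinuous_const
  exists_orderIso x y _ := ⟨OrderIso.addRight (y - x), fun _ => rfl, by simp⟩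

theorem IsHomogeneousColouring.exists_orderIso_of_floor_eq {k : ℕ} {d : ℝ → ℕ}
    (hd : IsHomogeneousColouring k d) {x y : ℝ} (hxy : gapCopies d x = gapCopies d y)
    (hfloor : ⌊x⌋ = ⌊y⌋) :
    ∃ f : ℝ ≃o ℝ, (∀ j : ℤ, f j = j) ∧ (∀ z, gapCopies d (f z) = gapCopies d z) ∧ f x = y := by
  obtain ⟨i, rfl | ⟨a, rfl⟩⟩ := exists_eq_intCast_or_intCast_add_sigmoid x <;>
  obtain ⟨j, rfl | ⟨b, rfl⟩⟩ := exists_eq_intCast_or_intCast_add_sigmoid y <;>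
  simp only [floor_intCast_add_sigmoid, Int.floor_intCast] at hfloor <;>
  subst hfloor <;>
  simp only [gapCopies_intCast, gapCopies_intCast_add_sigmoid] at hxy
  · exact ⟨.refl ℝ, fun _ => rfl, fun _ => rfl, rfl⟩
  · exact absurd hxy.symm (Nat.succ_ne_zero _)
  · exact absurd hxy (Nat.succ_ne_zero _)
  · obtain ⟨f, hf, rfl⟩ := hd.exists_orderIso a b (Nat.succ_injective hxy)
    exact ⟨(strictMono_gapMap f.strictMono).orderIsoOfRightInverse _ (gapMap f.symm)
      (rightInverse_gapMap f.right_inv), gapMap_intCast f, gapCopies_gapMap hf,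
      gapMap_intCast_add_sigmoid f i a⟩

theorem IsHomogeneousColouring.gapCopies {k : ℕ} {d : ℝ → ℕ} (hd : IsHomogeneousColouring k d) :
    IsHomogeneousColouring (k + 1) (gapCopies d) where
  range_eq := range_gapCopies hd.range_eq
  lowerSemicontinuous := lowerSemicontinuous_gapCopies hd.lowerSemicontinuous
  exists_orderIso x y hxy := by
    obtain ⟨f, -, hf, hfx⟩ := hd.exists_orderIso_of_floor_eq (x := x + (⌊y⌋ - ⌊x⌋ : ℤ))
      (y := y) (by rw [gapCopies_add_intCast, hxy])
      (by rw [Int.floor_add_intCast, add_sub_cancel])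
    exact ⟨(OrderIso.addRight ((⌊y⌋ - ⌊x⌋ : ℤ) : ℝ)).trans f,
      fun z => (hf _).trans (gapCopies_add_intCast d z _), hfx⟩

theorem exists_isHomogeneousColouring (k : ℕ) : ∃ d, IsHomogeneousColouring k d := by
  induction k with
  | zero => exact ⟨_, isHomogeneousColouring_zero⟩
  | succ k ih => exact ih.elim fun _ hd => ⟨_, hd.gapCopies⟩

end Gaps

section ComplCoveredBy

variable {X : Type*} [TopologicalSpace X]

/-- The complement of `p` is a union of `k` preconnected sets: a topological way of saying that it
has at most `k` components. -/
def ComplCoveredBy (k : ℕ) (p : X) : Prop :=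
  ∃ A : Fin k → Set X, (∀ i, IsPreconnected (A i)) ∧ ⋃ i, A i = {p}ᶜ

theorem complCoveredBy_one {p : X} :
    ComplCoveredBy 1 p ↔ IsPreconnected ({p}ᶜ : Set X) := by
  constructor
  · rintro ⟨A, hA, hcover⟩
    have iUnion_eq : ⋃ i, A i = A 0 := iSup_unique A
    exact hcover ▸ iUnion_eq ▸ hA 0
  · exact fun h => ⟨fun _ => {p}ᶜ, fun _ => h, iUnion_const _⟩

theorem ComplCoveredBy.map {k : ℕ} {p : X}
    (h : ComplCoveredBy k p) (g : X ≃ₜ X) : ComplCoveredBy k (g p) := by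
  obtain ⟨A, hA, hcover⟩ := h
  refine ⟨fun i => g '' A i, fun i => (hA i).image g g.continuous.continuousOn, ?_⟩
  rw [← image_iUnion, hcover, image_compl_eq g.bijective, image_singleton]

theorem complCoveredBy_apply_iff {k : ℕ} (g : X ≃ₜ X) {p : X} :
    ComplCoveredBy k (g p) ↔ ComplCoveredBy k p :=
  ⟨fun h => by simpa only [g.symm_apply_apply] using h.map g.symm, fun h => h.map g⟩

end ComplCoveredBy

section RadialMap

variable {E : Type*} [NormedAddCommGroup E] [NormedSpace ℝ E]

/-- Keeps the direction of `x` and applies `f` to its norm; it fixes `0`, where `f ‖x‖ / ‖x‖` is the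
junk value `0`. -/
noncomputable def radialMap (f : ℝ → ℝ) (x : E) : E := (f ‖x‖ / ‖x‖) • x

theorem radialMap_smul {f : ℝ → ℝ} (h0 : f 0 = 0) {t : ℝ} (ht : 0 ≤ t) {u : E} (hu : ‖u‖ = 1) :
    radialMap f (t • u) = f t • u := by
  rw [radialMap, norm_smul, hu, mul_one, Real.norm_of_nonneg ht, smul_smul]
  rcases eq_or_ne t 0 with rfl | ht0
  · rw [h0, zero_div, zero_mul]
  · rw [div_mul_cancel₀ _ ht0]

variable {f : ℝ ≃o ℝ}

theorem norm_radialMap (h0 : f 0 = 0) (x : E) : ‖radialMap f x‖ = f ‖x‖ := by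
  have f_norm_nonneg : 0 ≤ f ‖x‖ := h0.symm.trans_le (f.monotone (norm_nonneg x))
  rw [radialMap, norm_smul, Real.norm_of_nonneg (div_nonneg f_norm_nonneg (norm_nonneg x))]
  rcases eq_or_ne ‖x‖ 0 with hx | hx
  · rw [hx, mul_zero, h0]
  · rw [div_mul_cancel₀ _ hx]

theorem radialMap_symm_radialMap (h0 : f 0 = 0) (x : E) :
    radialMap f.symm (radialMap f x) = x := by
  rw [radialMap, norm_radialMap h0, f.symm_apply_apply, radialMap, smul_smul]
  rcases eq_or_ne x 0 with rfl | hx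
  · rw [smul_zero]
  · have hf : f ‖x‖ ≠ 0 := h0 ▸ f.injective.ne (norm_ne_zero_iff.2 hx)
    rw [div_mul_div_cancel₀ hf, div_self (norm_ne_zero_iff.2 hx), one_smul]

theorem continuous_radialMap (h0 : f 0 = 0) : Continuous (radialMap f : E → E) := by
  refine continuous_iff_continuousAt.2 fun x => ?_
  have f_norm : Continuous fun y : E => f ‖y‖ := f.continuous.comp continuous_norm
  rcases eq_or_ne x 0 with rfl | hx
  · rw [ContinuousAt, radialMap, smul_zero, tendsto_zero_iff_norm_tendsto_zero]
    simpa only [norm_radialMap h0, norm_zero, h0] using f_norm.tendsto 0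
  · exact (f_norm.continuousAt.div continuous_norm.continuousAt (norm_ne_zero_iff.2 hx)).smul
      continuousAt_id

/-- `radialMap f` as a homeomorphism. -/
noncomputable def radialHomeo (f : ℝ ≃o ℝ) (h0 : f 0 = 0) : E ≃ₜ E where
  toFun := radialMap f
  invFun := radialMap f.symm
  left_inv := radialMap_symm_radialMap h0
  right_inv := radialMap_symm_radialMap (f := f.symm) (f.symm_apply_eq.2 h0.symm)
  continuous_toFun := continuous_radialMap h0
  continuous_invFun := continuous_radialMap (f.symm_apply_eq.2 h0.symm)

end RadialMap

section StarGraph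

variable {n : ℕ}

theorem starVertex_eq_pow (k : Fin n) :
    starVertex n k = Complex.exp (2 * Real.pi * Complex.I / n) ^ (k : ℕ) := by
  rw [starVertex, ← Complex.exp_nat_mul]
  ring_nf

theorem starVertex_pow (k : Fin n) : starVertex n k ^ n = 1 := by
  rw [starVertex_eq_pow, pow_right_comm,
    (Complex.isPrimitiveRoot_exp n k.pos.ne').pow_eq_one, one_pow]

theorem norm_starVertex (k : Fin n) : ‖starVertex n k‖ = 1 :=
  Complex.norm_eq_one_of_pow_eq_one (starVertex_pow k) k.pos.ne'

theorem starVertex_ne_zero (k : Fin n) : starVertex n k ≠ 0 :=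
  norm_ne_zero_iff.1 ((norm_starVertex k).trans_ne one_ne_zero)

theorem starVertex_injective : Function.Injective (starVertex n) := by
  intro j k hjk
  rw [starVertex_eq_pow, starVertex_eq_pow] at hjk
  exact Fin.ext ((Complex.isPrimitiveRoot_exp n k.pos.ne').pow_inj j.is_lt k.is_lt hjk)

theorem exists_starVertex_eq [NeZero n] {v : ℂ} (hv : v ^ n = 1) : ∃ k, starVertex n k = v := by
  obtain ⟨i, hi, rfl⟩ := (Complex.isPrimitiveRoot_exp n (NeZero.ne n)).eq_pow_of_pow_eq_one hv
  exact ⟨⟨i, hi⟩, starVertex_eq_pow _⟩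

theorem norm_smul_starVertex (k : Fin n) {t : ℝ} (ht : 0 ≤ t) : ‖t • starVertex n k‖ = t := by
  rw [norm_smul, norm_starVertex, mul_one, Real.norm_of_nonneg ht]

theorem smul_starVertex_mem_starGraph (k : Fin n) {t : ℝ} (ht : t ∈ Icc (0 : ℝ) 1) :
    t • starVertex n k ∈ starGraph n :=
  mem_iUnion.2 ⟨k, 1 - t, t, sub_nonneg.2 ht.2, ht.1, sub_add_cancel 1 t,
    by rw [smul_zero, zero_add]⟩

theorem starVertex_mem_starGraph (k : Fin n) : starVertex n k ∈ starGraph n :=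
  mem_iUnion.2 ⟨k, right_mem_segment ℝ 0 _⟩

theorem exists_eq_smul_starVertex {x : ℂ} (hx : x ∈ starGraph n) :
    ∃ k, ∃ t ∈ Icc (0 : ℝ) 1, x = t • starVertex n k := by
  obtain ⟨k, a, b, ha, hb, hab, rfl⟩ := mem_iUnion.1 hx
  exact ⟨k, b, ⟨hb, by linarith⟩, by rw [smul_zero, zero_add]⟩

theorem norm_mem_Icc_of_mem_starGraph {x : ℂ} (hx : x ∈ starGraph n) : ‖x‖ ∈ Icc (0 : ℝ) 1 := by
  obtain ⟨k, t, ht, rfl⟩ := exists_eq_smul_starVertex hx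
  rwa [norm_smul_starVertex k ht.1]

theorem exists_starGraph_norm_eq [NeZero n] {t : ℝ} (ht : t ∈ Icc (0 : ℝ) 1) :
    ∃ x : starGraph n, ‖(x : ℂ)‖ = t :=
  ⟨⟨_, smul_starVertex_mem_starGraph 0 ht⟩, norm_smul_starVertex 0 ht.1⟩

theorem mem_starGraph_iff [NeZero n] {x : ℂ} :
    x ∈ starGraph n ↔ ‖x‖ ≤ 1 ∧ x ^ n = (‖x‖ : ℂ) ^ n := by
  constructor
  · intro hx
    obtain ⟨k, t, ht, rfl⟩ := exists_eq_smul_starVertex hx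
    rw [norm_smul_starVertex k ht.1, Complex.real_smul, mul_pow, starVertex_pow, mul_one]
    exact ⟨ht.2, rfl⟩
  · rintro ⟨hx1, hx⟩
    rcases eq_or_ne x 0 with rfl | hx0
    · exact mem_iUnion.2 ⟨0, left_mem_segment ℝ 0 _⟩
    · have hnorm : (‖x‖ : ℂ) ≠ 0 := Complex.ofReal_ne_zero.2 (norm_ne_zero_iff.2 hx0)
      obtain ⟨k, hk⟩ := exists_starVertex_eq (n := n) (v := x / ‖x‖)
        (by rw [div_pow, hx, div_self (pow_ne_zero n hnorm)])
      have : ‖x‖ • starVertex n k = x := by rw [hk, Complex.real_smul, mul_div_cancel₀ _ hnorm]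
      exact this ▸ smul_starVertex_mem_starGraph k ⟨norm_nonneg x, hx1⟩

theorem mul_radialMap_mem_starGraph_iff [NeZero n] {f : ℝ ≃o ℝ} (h0 : f 0 = 0) (h1 : f 1 = 1)
    {v : ℂ} (hv : v ^ n = 1) {x : ℂ} : v * radialMap f x ∈ starGraph n ↔ x ∈ starGraph n := by
  have hnorm : ‖v * radialMap f x‖ = f ‖x‖ := by
    rw [norm_mul, Complex.norm_eq_one_of_pow_eq_one hv (NeZero.ne n), one_mul, norm_radialMap h0]
  rw [mem_starGraph_iff, mem_starGraph_iff, hnorm, mul_pow, hv, one_mul]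
  refine and_congr (by simpa only [h1] using f.le_iff_le (x := ‖x‖) (y := 1)) ?_
  rcases eq_or_ne x 0 with rfl | hx
  · simp [radialMap, h0]
  · have hx' : (‖x‖ : ℂ) ^ n ≠ 0 := pow_ne_zero n (Complex.ofReal_ne_zero.2 (norm_ne_zero_iff.2 hx))
    have hf : (f ‖x‖ : ℂ) ^ n ≠ 0 :=
      pow_ne_zero n (Complex.ofReal_ne_zero.2 (h0 ▸ f.injective.ne (norm_ne_zero_iff.2 hx)))
    rw [radialMap, Complex.real_smul, mul_pow, Complex.ofReal_div, div_pow, div_mul_eq_mul_div,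
      div_eq_iff hx', mul_right_inj' hf]

theorem exists_homeomorph_starGraph [NeZero n] {f : ℝ ≃o ℝ} (h0 : f 0 = 0) (h1 : f 1 = 1)
    {x y : starGraph n} (hxy : f ‖(x : ℂ)‖ = ‖(y : ℂ)‖) :
    ∃ g : starGraph n ≃ₜ starGraph n, (∀ z, ‖(g z : ℂ)‖ = f ‖(z : ℂ)‖) ∧ g x = y := by
  obtain ⟨j, s, hs, hx⟩ := exists_eq_smul_starVertex x.2
  obtain ⟨k, t, ht, hy⟩ := exists_eq_smul_starVertex y.2
  set v : ℂ := starVertex n k / starVertex n j with hv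
  have v_pow : v ^ n = 1 := by rw [div_pow, starVertex_pow, starVertex_pow, div_one]
  have v_ne_zero : v ≠ 0 := div_ne_zero (starVertex_ne_zero k) (starVertex_ne_zero j)
  refine ⟨((radialHomeo f h0).trans (Homeomorph.mulLeft₀ v v_ne_zero)).subtype fun z =>
    (mul_radialMap_mem_starGraph_iff h0 h1 v_pow).symm, fun z => ?_, Subtype.ext ?_⟩
  · change ‖v * radialMap f (z : ℂ)‖ = _
    rw [norm_mul, Complex.norm_eq_one_of_pow_eq_one v_pow (NeZero.ne n), one_mul,
      norm_radialMap h0]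
  · change v * radialMap f (x : ℂ) = y
    rw [hx, hy, norm_smul_starVertex j hs.1, norm_smul_starVertex k ht.1] at hxy
    rw [hx, radialMap_smul h0 hs.1 (norm_starVertex j), hxy, mul_smul_comm, hv,
      div_mul_cancel₀ _ (starVertex_ne_zero j), hy]

theorem starConvex_starGraph : StarConvex ℝ 0 (starGraph n) :=
  starConvex_iUnion fun k => (convex_segment 0 (starVertex n k)).starConvex (left_mem_segment ℝ _ _)

/-- The points of the star graph off the ray `{s • v | r ≤ s}`, where `v` is the `k`-th vertex. -/
def innerPart (k : Fin n) (r : ℝ) : Set (starGraph n) :=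
  {x | ∀ s ≥ r, (x : ℂ) ≠ s • starVertex n k}

/-- The points of the `k`-th edge at distance more than `r` from the centre. -/
def outerPart (k : Fin n) (r : ℝ) : Set (starGraph n) :=
  {x | ∃ s ∈ Ioc r 1, (x : ℂ) = s • starVertex n k}

theorem isPreconnected_innerPart (k : Fin n) {r : ℝ} (hr : 0 < r) :
    IsPreconnected (innerPart k r) := by
  set S : Set ℂ := {x | ∀ s ≥ r, x ≠ s • starVertex n k}
  have starConvex_S : StarConvex ℝ 0 S := by
    refine starConvex_zero_iff.2 fun x hx t ht0 ht1 s hs heq => ?_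
    have ht : t ≠ 0 := by
      rintro rfl
      exact smul_ne_zero (hr.trans_le hs).ne' (starVertex_ne_zero k) (by rw [← heq, zero_smul])
    refine hx (t⁻¹ * s) ?_ (by rw [mul_smul, ← heq, inv_smul_smul₀ ht])
    exact hs.trans (le_mul_of_one_le_left (hr.le.trans hs)
      ((one_le_inv₀ (ht0.lt_of_ne' ht)).2 ht1))
  have zero_mem : 0 ∈ starGraph n ∩ S :=
    ⟨mem_iUnion.2 ⟨k, left_mem_segment ℝ 0 _⟩, fun s hs heq =>
      smul_ne_zero (hr.trans_le hs).ne' (starVertex_ne_zero k) heq.symm⟩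
  have image_eq : Subtype.val '' innerPart k r = starGraph n ∩ S :=
    Subtype.image_preimage_coe (starGraph n) S
  refine IsInducing.subtypeVal.isPreconnected_image.1 (image_eq ▸ ?_)
  exact ((starConvex_starGraph.inter starConvex_S).isPathConnected
    zero_mem).isConnected.isPreconnected

theorem isPreconnected_outerPart (k : Fin n) {r : ℝ} (hr : 0 ≤ r) :
    IsPreconnected (outerPart k r) := by
  have image_eq : Subtype.val '' outerPart k r = (fun s : ℝ => s • starVertex n k) '' Ioc r 1 := by
    ext x
    constructor
    · rintro ⟨_, ⟨s, hs, hx⟩, rfl⟩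
      exact ⟨s, hs, hx.symm⟩
    · rintro ⟨s, hs, rfl⟩
      exact ⟨⟨_, smul_starVertex_mem_starGraph k ⟨hr.trans hs.1.le, hs.2⟩⟩, ⟨s, hs, rfl⟩, rfl⟩
  exact IsInducing.subtypeVal.isPreconnected_image.1
    (image_eq ▸ isPreconnected_Ioc.image _ (by fun_prop))

theorem innerPart_union_outerPart {k : Fin n} {r : ℝ} (hr : 0 ≤ r) {p : starGraph n}
    (hp : (p : ℂ) = r • starVertex n k) : innerPart k r ∪ outerPart k r = {p}ᶜ := by
  ext x
  constructor
  · rintro (hx | ⟨s, hs, hxs⟩) rfl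
    · exact hx r le_rfl hp
    · have := congrArg norm (hp.symm.trans hxs)
      rw [norm_smul_starVertex k hr, norm_smul_starVertex k (hr.trans hs.1.le)] at this
      exact hs.1.ne this
  · intro hxp
    refine or_iff_not_imp_left.2 fun hx => ?_
    simp only [innerPart, mem_ofPred_eq, not_forall, not_not] at hx
    obtain ⟨s, hs, hxs⟩ := hx
    refine ⟨s, ⟨hs.lt_of_ne ?_, ?_⟩, hxs⟩
    · rintro rfl
      exact hxp (Subtype.ext (hxs.trans hp.symm))
    · rw [← norm_smul_starVertex k (hr.trans hs), ← hxs]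
      exact (norm_mem_Icc_of_mem_starGraph x.2).2

theorem complCoveredBy_one_of_norm_eq_one {p : starGraph n} (hp : ‖(p : ℂ)‖ = 1) :
    ComplCoveredBy 1 p := by
  obtain ⟨k, r, hr, hpk⟩ := exists_eq_smul_starVertex p.2
  obtain rfl : r = 1 := by rw [← hp, hpk, norm_smul_starVertex k hr.1]
  have outerPart_eq : outerPart k 1 = ∅ := by simp [outerPart]
  rw [complCoveredBy_one, ← innerPart_union_outerPart hr.1 hpk, outerPart_eq, union_empty]
  exact isPreconnected_innerPart k one_pos

theorem complCoveredBy_two_of_norm_ne_zero {p : starGraph n} (hp : ‖(p : ℂ)‖ ≠ 0) :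
    ComplCoveredBy 2 p := by
  obtain ⟨k, r, hr, hpk⟩ := exists_eq_smul_starVertex p.2
  rw [hpk, norm_smul_starVertex k hr.1] at hp
  refine ⟨![innerPart k r, outerPart k r], Fin.forall_fin_two.2 ⟨?_, ?_⟩, ?_⟩
  · exact isPreconnected_innerPart k (hr.1.lt_of_ne' hp)
  · exact isPreconnected_outerPart k hr.1
  · rw [← innerPart_union_outerPart hr.1 hpk]
    ext x
    simp only [mem_iUnion, Fin.exists_fin_two, Matrix.cons_val_zero, Matrix.cons_val_one,
      mem_union]

theorem div_norm_mem_range_starVertex {x : ℂ} (hx : x ∈ starGraph n) (hx0 : ‖x‖ ≠ 0) :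
    x / ‖x‖ ∈ range (starVertex n) := by
  obtain ⟨k, t, ht, rfl⟩ := exists_eq_smul_starVertex hx
  rw [norm_smul_starVertex k ht.1] at hx0 ⊢
  exact ⟨k, by rw [Complex.real_smul, mul_div_cancel_left₀ _ (Complex.ofReal_ne_zero.2 hx0)]⟩

theorem le_of_complCoveredBy_of_norm_eq_zero {p : starGraph n} (hp : ‖(p : ℂ)‖ = 0) {m : ℕ}
    (h : ComplCoveredBy m p) : n ≤ m := by
  obtain ⟨A, hA, hcover⟩ := h
  have norm_ne_zero : ∀ x ∈ ({p}ᶜ : Set (starGraph n)), ‖(x : ℂ)‖ ≠ 0 := fun x hxp hx =>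
    hxp (Subtype.ext ((norm_eq_zero.1 hx).trans (norm_eq_zero.1 hp).symm))
  have exists_piece (k : Fin n) : ∃ i, ⟨starVertex n k, starVertex_mem_starGraph k⟩ ∈ A i :=
    mem_iUnion.1 (hcover.symm ▸ ne_of_apply_ne (fun x : starGraph n => ‖(x : ℂ)‖)
      (by simp [norm_starVertex, hp]))
  choose i hi using exists_piece
  refine Fin.le_of_injective i fun j k hjk => starVertex_injective ?_
  have A_subset : A (i k) ⊆ {p}ᶜ := (subset_iUnion A (i k)).trans hcover.subset
  -- The direction `x / ‖x‖` takes finitely many values, so it is constant on each piece.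
  have := (hA (i k)).constant_of_mapsTo (finite_range (starVertex n)).isDiscrete
    (f := fun x : starGraph n => (x : ℂ) / ‖(x : ℂ)‖)
    (ContinuousOn.div (by fun_prop) (by fun_prop) fun x hx =>
      Complex.ofReal_ne_zero.2 (norm_ne_zero x (A_subset hx)))
    (fun x hx => div_norm_mem_range_starVertex x.2 (norm_ne_zero x (A_subset hx)))
    (hjk ▸ hi j) (hi k)
  simpa only [norm_starVertex, Complex.ofReal_one, div_one] using this

/-- A continuous weight on the star graph that vanishes on all edges but the `k`-th, on which it is
proportional to `‖x‖ ^ (n - 1)`. -/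
noncomputable def edgeWeight (k : Fin n) (x : ℂ) : ℝ :=
  ∏ j ∈ Finset.univ.erase k, ‖x - ‖x‖ • starVertex n j‖

theorem continuous_edgeWeight (k : Fin n) : Continuous (edgeWeight k) := by
  unfold edgeWeight
  fun_prop

theorem edgeWeight_smul (k : Fin n) {t : ℝ} (ht : 0 ≤ t) (x : ℂ) :
    edgeWeight k (t • x) = t ^ (n - 1) * edgeWeight k x := by
  have term (j : Fin n) :
      ‖t • x - ‖t • x‖ • starVertex n j‖ = t * ‖x - ‖x‖ • starVertex n j‖ := by
    rw [norm_smul, Real.norm_of_nonneg ht, mul_smul, ← smul_sub, norm_smul,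
      Real.norm_of_nonneg ht]
  simp only [edgeWeight, term, Finset.prod_mul_distrib, Finset.prod_const,
    Finset.card_erase_of_mem (Finset.mem_univ k), Finset.card_univ, Fintype.card_fin]

theorem edgeWeight_starVertex_pos (k : Fin n) : 0 < edgeWeight k (starVertex n k) := by
  refine Finset.prod_pos fun j hj => norm_pos_iff.2 (sub_ne_zero.2 ?_)
  rw [norm_starVertex, one_smul]
  exact starVertex_injective.ne (Finset.ne_of_mem_erase hj).symm

theorem edgeWeight_starVertex_of_ne {j k : Fin n} (hjk : j ≠ k) :
    edgeWeight k (starVertex n j) = 0 :=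
  Finset.prod_eq_zero (Finset.mem_erase.2 ⟨hjk, Finset.mem_univ j⟩)
    (by rw [norm_starVertex, one_smul, sub_self, norm_zero])

theorem eq_of_edgeWeight_eq (hn : n ≠ 1) {k : Fin n} {r : ℝ} (hr : 0 < r) {x : ℂ}
    (hx : x ∈ starGraph n) (h : edgeWeight k x = edgeWeight k (r • starVertex n k)) :
    x = r • starVertex n k := by
  obtain ⟨j, t, ht, rfl⟩ := exists_eq_smul_starVertex hx
  rw [edgeWeight_smul k ht.1, edgeWeight_smul k hr.le] at h
  have weight_pos := edgeWeight_starVertex_pos k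
  obtain rfl : j = k := by
    by_contra hjk
    rw [edgeWeight_starVertex_of_ne hjk, mul_zero] at h
    exact (mul_pos (pow_pos hr _) weight_pos).ne h
  have hn' : n - 1 ≠ 0 := by have := j.pos; omega
  rw [(pow_left_inj₀ ht.1 hr.le hn').1 (mul_right_cancel₀ weight_pos.ne' h)]

theorem norm_eq_one_of_complCoveredBy_one (hn : 2 ≤ n) {p : starGraph n}
    (h : ComplCoveredBy 1 p) : ‖(p : ℂ)‖ = 1 := by
  by_contra hp1
  obtain ⟨k, r, hr, hp⟩ := exists_eq_smul_starVertex p.2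
  have hr0 : r ≠ 0 := by
    rintro rfl
    exact (hn.trans (le_of_complCoveredBy_of_norm_eq_zero (by simp [hp]) h)).not_gt one_lt_two
  have : Nontrivial (Fin n) := Fin.nontrivial_iff_two_le.2 hn
  obtain ⟨j, hjk⟩ := exists_ne k
  have starVertex_mem (i : Fin n) : ⟨starVertex n i, starVertex_mem_starGraph i⟩ ∈ ({p}ᶜ : Set _) :=
    ne_of_apply_ne (fun x : starGraph n => ‖(x : ℂ)‖) ((norm_starVertex i).trans_ne (Ne.symm hp1))
  have weight_mem_Icc : edgeWeight k p ∈
      Icc (edgeWeight k (starVertex n j)) (edgeWeight k (starVertex n k)) := by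
    have weight_nonneg := (edgeWeight_starVertex_pos k).le
    rw [edgeWeight_starVertex_of_ne hjk, hp, edgeWeight_smul k hr.1]
    exact ⟨mul_nonneg (pow_nonneg hr.1 _) weight_nonneg,
      mul_le_of_le_one_left weight_nonneg (pow_le_one₀ hr.1 hr.2)⟩
  -- On the connected set `{p}ᶜ` the weight would take its value at `p` a second time.
  obtain ⟨x, hxp, hx⟩ := (complCoveredBy_one.1 h).intermediate_value (starVertex_mem j)
    (starVertex_mem k) ((continuous_edgeWeight k).comp continuous_subtype_val).continuousOn
    weight_mem_Icc
  exact hxp (Subtype.ext ((eq_of_edgeWeight_eq (by omega) (hr.1.lt_of_ne' hr0) x.2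
    (hx.trans (congrArg _ hp))).trans hp.symm))

theorem norm_eq_zero_iff_not_complCoveredBy_two (hn : 3 ≤ n) {p : starGraph n} :
    ‖(p : ℂ)‖ = 0 ↔ ¬ ComplCoveredBy 2 p :=
  ⟨fun hp h => (hn.trans (le_of_complCoveredBy_of_norm_eq_zero hp h)).not_gt (by decide),
    not_imp_comm.1 complCoveredBy_two_of_norm_ne_zero⟩

theorem norm_eq_one_iff_complCoveredBy_one (hn : 2 ≤ n) {p : starGraph n} :
    ‖(p : ℂ)‖ = 1 ↔ ComplCoveredBy 1 p :=
  ⟨complCoveredBy_one_of_norm_eq_one, norm_eq_one_of_complCoveredBy_one hn⟩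

/-- The colouring of the star graph that gives the centre colour `0`, and the remaining points the
colour of their norm under `gapCopies d`, shifted up by one. -/
noncomputable def starColour (d : ℝ → ℕ) : starGraph n → ℕ :=
  addStratum {x | ‖(x : ℂ)‖ = 0} fun x => gapCopies d ‖(x : ℂ)‖

theorem starColour_eq_zero_iff {d : ℝ → ℕ} {x : starGraph n} :
    starColour d x = 0 ↔ ‖(x : ℂ)‖ = 0 :=
  addStratum_eq_zero_iff

theorem starColour_of_norm_ne_zero {d : ℝ → ℕ} {x : starGraph n} (hx : ‖(x : ℂ)‖ ≠ 0) :
    starColour d x = gapCopies d ‖(x : ℂ)‖ + 1 :=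
  addStratum_of_notMem (Z := {x : starGraph n | ‖(x : ℂ)‖ = 0}) hx

theorem lowerSemicontinuous_starColour {d : ℝ → ℕ} (hd : LowerSemicontinuous d) :
    LowerSemicontinuous (starColour (n := n) d) := by
  have continuous_norm : Continuous fun x : starGraph n => ‖(x : ℂ)‖ :=
    continuous_subtype_val.norm
  exact lowerSemicontinuous_addStratum (isClosed_eq continuous_norm continuous_const) fun x _ =>
    (lowerSemicontinuous_gapCopies hd).comp continuous_norm x

theorem range_starColour [NeZero n] {k : ℕ} {d : ℝ → ℕ} (hd : range d = Iic k) :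
    range (starColour (n := n) d) = Iic (k + 2) := by
  refine range_addStratum (exists_starGraph_norm_eq (left_mem_Icc.2 zero_le_one))
    ((subset_antisymm ?_ ?_).trans (range_gapCopies hd))
  · rintro _ ⟨x, -, rfl⟩
    exact mem_range_self _
  · rw [← (periodic_gapCopies d).image_Ioc one_pos 0, zero_add]
    rintro _ ⟨t, ht, rfl⟩
    obtain ⟨x, rfl⟩ := exists_starGraph_norm_eq (n := n) (Ioc_subset_Icc_self ht)
    exact ⟨x, ht.1.ne', rfl⟩

theorem starColour_eq_of_norm {d : ℝ → ℕ} {x y : starGraph n}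
    (h0 : ‖(x : ℂ)‖ = 0 ↔ ‖(y : ℂ)‖ = 0)
    (h : gapCopies d ‖(x : ℂ)‖ = gapCopies d ‖(y : ℂ)‖) : starColour d x = starColour d y :=
  addStratum_congr h0 h

theorem exists_orderIso_of_starColour_eq {k : ℕ} {d : ℝ → ℕ} (hd : IsHomogeneousColouring k d)
    {x y : starGraph n} (hxy : starColour d x = starColour d y) :
    ∃ f : ℝ ≃o ℝ, (∀ j : ℤ, f j = j) ∧ (∀ z, gapCopies d (f z) = gapCopies d z) ∧
      f ‖(x : ℂ)‖ = ‖(y : ℂ)‖ := by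
  have h0 : ‖(x : ℂ)‖ = 0 ↔ ‖(y : ℂ)‖ = 0 := by
    rw [← starColour_eq_zero_iff (d := d), hxy, starColour_eq_zero_iff]
  by_cases hx : ‖(x : ℂ)‖ = 0
  · exact ⟨.refl ℝ, fun _ => rfl, fun _ => rfl, hx.trans (h0.1 hx).symm⟩
  have hy := mt h0.2 hx
  rw [starColour_of_norm_ne_zero hx, starColour_of_norm_ne_zero hy, Nat.succ_inj] at hxy
  have norm_mem_Ioc {z : starGraph n} (hz : ‖(z : ℂ)‖ ≠ 0) : ‖(z : ℂ)‖ ∈ Ioc (0 : ℝ) 1 :=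
    ⟨(norm_nonneg _).lt_of_ne' hz, (norm_mem_Icc_of_mem_starGraph z.2).2⟩
  exact hd.exists_orderIso_of_floor_eq hxy
    (floor_eq_floor_of_gapCopies_eq (norm_mem_Ioc hx) (norm_mem_Ioc hy) hxy)

theorem exists_mem_colourStabilizer_starColour [NeZero n] {k : ℕ} {d : ℝ → ℕ}
    (hd : IsHomogeneousColouring k d) {x y : starGraph n} (hxy : starColour d x = starColour d y) :
    ∃ g ∈ colourStabilizer (starColour d), g x = y := by
  obtain ⟨f, f_int, hf, hfxy⟩ := exists_orderIso_of_starColour_eq hd hxy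
  have f_zero : f 0 = 0 := by simpa only [Int.cast_zero] using f_int 0
  have f_one : f 1 = 1 := by simpa only [Int.cast_one] using f_int 1
  obtain ⟨g, hg, hgx⟩ := exists_homeomorph_starGraph f_zero f_one hfxy
  refine ⟨g, fun z => starColour_eq_of_norm ?_ ?_, hgx⟩
  · rw [hg, f.injective.eq_iff' f_zero]
  · rw [hg, hf]

theorem natCast_add_two_mem_PH_starGraph [NeZero n] (k : ℕ) :
    ((k + 2 : ℕ) : ℕ∞) ∈ PH (starGraph n) := by
  obtain ⟨d, hd⟩ := exists_isHomogeneousColouring k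
  exact ⟨colourStabilizer (starColour d),
    height_colourStabilizer (lowerSemicontinuous_starColour hd.lowerSemicontinuous)
      (range_starColour hd.range_eq) fun _ _ => exists_mem_colourStabilizer_starColour hd⟩

theorem top_mem_PH_starGraph [NeZero n] : ⊤ ∈ PH (starGraph n) := by
  have : Infinite (starGraph n) :=
    have := Icc.infinite (zero_lt_one' ℝ)
    .of_surjective (fun x => (⟨‖(x : ℂ)‖, norm_mem_Icc_of_mem_starGraph x.2⟩ : I)) fun t =>
      (exists_starGraph_norm_eq t.2).imp fun _ => Subtype.ext
  exact ⟨⊥, height_bot_of_infinite⟩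

theorem two_le_height_starGraph (hn : 3 ≤ n) (G : Subgroup (starGraph n ≃ₜ starGraph n)) :
    2 ≤ height G := by
  have : NeZero n := ⟨by omega⟩
  have starColour_apply (g : starGraph n ≃ₜ starGraph n) (x : starGraph n) :
      starColour (fun _ => 0) (g x) = starColour (fun _ => 0) x := by
    have h0 : ‖(g x : ℂ)‖ = 0 ↔ ‖(x : ℂ)‖ = 0 := by
      simp only [norm_eq_zero_iff_not_complCoveredBy_two hn, complCoveredBy_apply_iff]
    have h1 : ‖(g x : ℂ)‖ = 1 ↔ ‖(x : ℂ)‖ = 1 := by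
      simp only [norm_eq_one_iff_complCoveredBy_one (Nat.le_of_succ_le hn),
        complCoveredBy_apply_iff]
    refine starColour_eq_of_norm h0 (addStratum_congr ?_ rfl)
    rw [mem_range_intCast_iff_of_mem_Icc (norm_mem_Icc_of_mem_starGraph (g x).2),
      mem_range_intCast_iff_of_mem_Icc (norm_mem_Icc_of_mem_starGraph x.2), h0, h1]
  exact le_sSup ⟨2, mem_heightSet_of_lowerSemicontinuous
    (lowerSemicontinuous_starColour lowerSemicontinuous_const)
    (range_starColour isHomogeneousColouring_zero.range_eq) fun g _ => starColour_apply g, rfl⟩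

end StarGraph

/-- The set of achievable heights on the star graph `*_n` is `{2, 3, 4, …} ∪ {+∞}`. -/
theorem PH_star (n : ℕ) (hn : 3 ≤ n) :
    PH (↥(starGraph n)) = {h : ℕ∞ | 2 ≤ h} := by
  have : NeZero n := ⟨by omega⟩
  refine subset_antisymm ?_ fun h (hh : 2 ≤ h) => ?_
  · rintro _ ⟨G, rfl⟩
    exact two_le_height_starGraph hn G
  · induction h using ENat.recTopCoe with
    | top => exact top_mem_PH_starGraph
    | coe m =>
      obtain ⟨k, rfl⟩ := Nat.exists_eq_add_of_le' (Nat.ofNat_le_cast.1 hh)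
      exact natCast_add_two_mem_PH_starGraph k
end
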